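/- arXiv:1911.11475 — 6 statements merged into one kernel-verified Lean document; each statement's English description precedes it below -/
import Mathlib

section
/- Eigenfunctions of the closed quantum Black–Scholes generator: let U : ℝ → ℝ be smooth with U'(x) > 0 for all x, let λ ∈ ℝ, and define φ_λ(x) = U'(x)^{-1/2} · exp( (iλ/σ²) ∫₀ˣ U'(s)^{-1} ds ). Then φ_λ satisfies the eigenvalue equation −iσ² U'(x) φ_λ'(x) − i(σ²/2) U''(x) φ_λ(x) = λ φ_λ(x) for all x ∈ ℝ. -/
/-- Eigenfunctions of the closed quantum Black–Scholes generator: for smooth `U` with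
`U' > 0` and `λ ∈ ℝ`, the function `φ_λ(x) = U'(x)^{-1/2} exp((iλ/σ²) ∫₀ˣ U'(s)⁻¹ ds)`
satisfies `−iσ² U'(x) φ_λ'(x) − i(σ²/2) U''(x) φ_λ(x) = λ φ_λ(x)` for all `x`. -/
theorem eigenfunctions_naive_cqbs
    (σ : ℝ) (hσ : 0 < σ)
    (U : ℝ → ℝ) (hU : ContDiff ℝ (⊤ : ℕ∞) U) (hU' : ∀ x : ℝ, 0 < deriv U x)
    (lam : ℝ) (φ : ℝ → ℂ)
    (hφ : ∀ x : ℝ,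
      φ x = (Complex.ofReal ((deriv U x) ^ (-(1 / 2 : ℝ)))) *
        Complex.exp ((Complex.I * lam / (σ ^ 2 : ℂ)) *
          Complex.ofReal (∫ s in (0 : ℝ)..x, (deriv U s)⁻¹)))
    (x : ℝ) :
    -Complex.I * (σ ^ 2 : ℂ) * (Complex.ofReal (deriv U x)) * deriv φ x
        - Complex.I * (σ ^ 2 / 2 : ℂ) * (Complex.ofReal (deriv (deriv U) x)) * φ x
      = (lam : ℂ) * φ x := by
  have hd : ContDiff ℝ 1 (deriv U) := by
    have h2 : ContDiff ℝ (1 + 1) U := by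
      have := contDiff_infty.1 hU 2
      rw [one_add_one_eq_two]
      exact_mod_cast this
    exact (contDiff_succ_iff_deriv.1 h2).2.2
  have hc : Continuous (fun s => (deriv U s)⁻¹) :=
    hd.continuous.inv₀ (fun s => (hU' s).ne')
  have h1 : HasDerivAt (deriv U) (deriv (deriv U) x) x :=
    ((hd.differentiable (by norm_num)) x).hasDerivAt
  have h3 := (h1.rpow_const (p := -(1 / 2 : ℝ)) (Or.inl (hU' x).ne')).ofReal_comp
  have h4 : HasDerivAt (fun y => ∫ s in (0 : ℝ)..y, (deriv U s)⁻¹) ((deriv U x)⁻¹) x :=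
    hc.integral_hasStrictDerivAt 0 x |>.hasDerivAt
  have h5 := (h4.ofReal_comp.const_mul (Complex.I * lam / (σ ^ 2 : ℂ))).cexp
  have h6 := h3.mul h5
  have h7 : HasDerivAt φ _ x := h6.congr_of_eventuallyEq (Filter.Eventually.of_forall hφ)
  rw [h7.deriv, hφ x, Real.rpow_sub_one (hU' x).ne']
  have hσ' : (σ : ℂ) ≠ 0 := by exact_mod_cast hσ.ne'
  have hu : ((deriv U x : ℝ) : ℂ) ≠ 0 := by exact_mod_cast (hU' x).ne'
  generalize Complex.exp _ = E
  generalize (deriv U x) ^ (-(1 / 2 : ℝ)) = R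
  push_cast
  field_simp
  ring_nf
  simp only [Complex.I_sq]
  ring
end

section
/- Under the Riemannian metric g = U', the closed quantum Black–Scholes generator is a conjugated momentum operator: for every smooth ψ : ℝ → ℂ, i[Ĥ_g, M_U]ψ = −iσ² g^{-1/2} · (g^{1/2} ψ)'; explicitly, −i(σ²/(2g))(U''ψ + 2U'ψ') = −iσ² g(x)^{-1/2} d/dx( g(x)^{1/2} ψ(x) ). -/
/-- Under the Riemannian metric `g = U'`, the closed quantum Black–Scholes generator is
a conjugated momentum operator: with `(Ĥ_gψ)(x) = −(σ²/(2g(x)))ψ''(x)`, for every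
smooth `ψ : ℝ → ℂ`, `i[Ĥ_g, M_U]ψ = −iσ² g^{-1/2} (g^{1/2} ψ)'`; explicitly
`−i(σ²/(2g))(U''ψ + 2U'ψ') = −iσ² g(x)^{-1/2} d/dx (g(x)^{1/2} ψ(x))`. -/
theorem cqbs_generator_geometric_form
    (σ : ℝ) (hσ : 0 < σ)
    (U : ℝ → ℝ) (hU : ContDiff ℝ (⊤ : ℕ∞) U)
    (g : ℝ → ℝ) (hg : g = deriv U) (hgpos : ∀ x : ℝ, 0 < g x)
    (Hg : (ℝ → ℂ) → ℝ → ℂ)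
    (hHg : ∀ (f : ℝ → ℂ) (x : ℝ),
      Hg f x = -(Complex.ofReal (σ ^ 2 / (2 * g x))) * deriv (deriv f) x)
    (ψ : ℝ → ℂ) (hψ : ContDiff ℝ (⊤ : ℕ∞) ψ) (x : ℝ) :
    Complex.I * (Hg (fun y => (U y : ℂ) * ψ y) x - (U x : ℂ) * Hg ψ x)
        = -Complex.I * (Complex.ofReal (σ ^ 2 / (2 * g x))) *
            (Complex.ofReal (deriv (deriv U) x) * ψ x
              + 2 * Complex.ofReal (deriv U x) * deriv ψ x) ∧
      -Complex.I * (Complex.ofReal (σ ^ 2 / (2 * g x))) *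
          (Complex.ofReal (deriv (deriv U) x) * ψ x
            + 2 * Complex.ofReal (deriv U x) * deriv ψ x)
        = -Complex.I * (σ ^ 2 : ℂ) * (Complex.ofReal (Real.sqrt (g x)))⁻¹ *
            deriv (fun y => Complex.ofReal (Real.sqrt (g y)) * ψ y) x := by
  have hU1 : ContDiff ℝ (⊤ : ℕ∞) (deriv U) := (contDiff_infty_iff_deriv.1 hU).2
  have hψ1 : ContDiff ℝ (⊤ : ℕ∞) (deriv ψ) := (contDiff_infty_iff_deriv.1 hψ).2
  have dU : ∀ y, HasDerivAt U (deriv U y) y := fun y =>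
    ((contDiff_infty_iff_deriv.1 hU).1 y).hasDerivAt
  have dU1 : ∀ y, HasDerivAt (deriv U) (deriv (deriv U) y) y := fun y =>
    ((contDiff_infty_iff_deriv.1 hU1).1 y).hasDerivAt
  have dψ : ∀ y, HasDerivAt ψ (deriv ψ y) y := fun y =>
    ((contDiff_infty_iff_deriv.1 hψ).1 y).hasDerivAt
  have dψ1 : ∀ y, HasDerivAt (deriv ψ) (deriv (deriv ψ) y) y := fun y =>
    ((contDiff_infty_iff_deriv.1 hψ1).1 y).hasDerivAt
  have e1 : deriv (fun y => (U y : ℂ) * ψ y)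
      = fun y => Complex.ofReal (deriv U y) * ψ y + (U y : ℂ) * deriv ψ y := by
    funext y
    exact ((dU y).ofReal_comp.mul (dψ y)).deriv
  have e2 : deriv (fun y => Complex.ofReal (deriv U y) * ψ y + (U y : ℂ) * deriv ψ y) x
      = (Complex.ofReal (deriv (deriv U) x) * ψ x + Complex.ofReal (deriv U x) * deriv ψ x)
        + (Complex.ofReal (deriv U x) * deriv ψ x + (U x : ℂ) * deriv (deriv ψ) x) :=
    (((dU1 x).ofReal_comp.mul (dψ x)).add ((dU x).ofReal_comp.mul (dψ1 x))).deriv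
  constructor
  · rw [hHg, hHg, e1, e2]
    ring
  · subst hg
    have hp := hgpos x
    have e3 : deriv (fun y => Complex.ofReal (Real.sqrt (deriv U y)) * ψ y) x
        = ((deriv (deriv U) x / (2 * Real.sqrt (deriv U x)) : ℝ) : ℂ) * ψ x
          + (Real.sqrt (deriv U x) : ℂ) * deriv ψ x :=
      (((dU1 x).sqrt hp.ne').ofReal_comp.mul (dψ x)).deriv
    rw [e3]
    have hs : 0 < Real.sqrt (deriv U x) := Real.sqrt_pos.2 hp
    have hsq : deriv U x = Real.sqrt (deriv U x) ^ 2 := (Real.sq_sqrt hp.le).symm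
    generalize Real.sqrt (deriv U x) = s at hs hsq ⊢
    rw [hsq]
    have hs' : (s : ℂ) ≠ 0 := by exact_mod_cast hs.ne'
    push_cast
    field_simp
end

section
/- Geometric eigenfunctions of the closed quantum Black–Scholes generator: for every λ ∈ ℝ, the function ψ_λ(x) = g(x)^{-1/2} e^{iλx/σ²} satisfies i[Ĥ_g, M_U]ψ_λ = λ ψ_λ; equivalently, the eigenfunctions are characterised by √(g(x)) · ψ_λ(x) = e^{iλx/σ²}. -/
/-- Geometric eigenfunctions of the closed quantum Black–Scholes generator: for every
`λ ∈ ℝ`, the function `ψ_λ`, characterised by `√(g(x)) ψ_λ(x) = e^{iλx/σ²}` (i.e.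
`ψ_λ(x) = g(x)^{-1/2} e^{iλx/σ²}`), satisfies `i[Ĥ_g, M_U]ψ_λ = λ ψ_λ`. -/
theorem geometric_eigenfunctions_cqbs
    (σ : ℝ) (hσ : 0 < σ)
    (U : ℝ → ℝ) (hU : ContDiff ℝ (⊤ : ℕ∞) U)
    (g : ℝ → ℝ) (hg : g = deriv U) (hgpos : ∀ x : ℝ, 0 < g x)
    (Hg : (ℝ → ℂ) → ℝ → ℂ)
    (hHg : ∀ (f : ℝ → ℂ) (x : ℝ),
      Hg f x = -(Complex.ofReal (σ ^ 2 / (2 * g x))) * deriv (deriv f) x)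
    (lam : ℝ) (ψ : ℝ → ℂ)
    (hψ : ∀ x : ℝ, Complex.ofReal (Real.sqrt (g x)) * ψ x
      = Complex.exp (Complex.I * lam * x / (σ ^ 2 : ℂ)))
    (x : ℝ) :
    Complex.I * (Hg (fun y => (U y : ℂ) * ψ y) x - (U x : ℂ) * Hg ψ x)
      = (lam : ℂ) * ψ x := by
  have hgC : ContDiff ℝ (⊤ : ℕ∞) g := by
    rw [hg]
    exact (contDiff_infty_iff_deriv.1 hU).2
  have hsC : ContDiff ℝ (⊤ : ℕ∞) (fun y : ℝ => Real.sqrt (g y)) :=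
    hgC.sqrt (fun y : ℝ => (hgpos y).ne')
  have hscC : ContDiff ℝ (⊤ : ℕ∞) (fun y : ℝ => ((Real.sqrt (g y) : ℝ) : ℂ)) :=
    Complex.ofRealCLM.contDiff.comp hsC
  have hs0 : ∀ y, ((Real.sqrt (g y) : ℝ) : ℂ) ≠ 0 := fun y =>
    Complex.ofReal_ne_zero.2 (Real.sqrt_pos.2 (hgpos y)).ne'
  have hlin : ContDiff ℝ (⊤ : ℕ∞) (fun y : ℝ => Complex.I * lam * (y : ℂ) / (σ ^ 2 : ℂ)) :=
    (contDiff_const.mul Complex.ofRealCLM.contDiff).div_const _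
  have hψC : ContDiff ℝ (⊤ : ℕ∞) ψ := by
    have h : ψ = fun y : ℝ => Complex.exp (Complex.I * lam * (y : ℂ) / (σ ^ 2 : ℂ))
        / ((Real.sqrt (g y) : ℝ) : ℂ) := by
      funext y
      rw [eq_div_iff (hs0 y), mul_comm, hψ y]
    rw [h]
    simp only [div_eq_mul_inv _ ((Real.sqrt _ : ℝ) : ℂ)]
    exact hlin.cexp.mul (hscC.inv hs0)
  have hψ1 : ∀ y, HasDerivAt ψ (deriv ψ y) y := fun y =>
    (hψC.differentiable (by simp) y).hasDerivAt
  have hψ2 : ∀ y, HasDerivAt (deriv ψ) (deriv (deriv ψ) y) y := fun y =>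
    ((contDiff_infty_iff_deriv.1 hψC).2.differentiable (by simp) y).hasDerivAt
  have hU1 : ∀ y, HasDerivAt (fun y : ℝ => (U y : ℂ)) (g y : ℂ) y := fun y => by
    rw [hg]
    exact (hU.differentiable (by simp) y).hasDerivAt.ofReal_comp
  obtain ⟨s', hs'⟩ : ∃ s', HasDerivAt (fun y : ℝ => Real.sqrt (g y)) s' x :=
    ⟨_, (hsC.differentiable (by simp) x).hasDerivAt⟩
  have hsc := hs'.ofReal_comp
  have hsq : ∀ y : ℝ, (g y : ℂ) = (Real.sqrt (g y) : ℂ) * (Real.sqrt (g y) : ℂ) := fun y => by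
    rw [← Complex.ofReal_mul, Real.mul_self_sqrt (hgpos y).le]
  have hg1 : HasDerivAt (fun y : ℝ => (g y : ℂ)) ((s' : ℂ) * (Real.sqrt (g x) : ℂ)
      + (Real.sqrt (g x) : ℂ) * (s' : ℂ)) x := by
    have h := hsc.mul hsc
    refine h.congr_of_eventuallyEq (Filter.Eventually.of_forall fun y => ?_)
    exact hsq y
  have hd1 : deriv (fun y : ℝ => (U y : ℂ) * ψ y)
      = fun y => (g y : ℂ) * ψ y + (U y : ℂ) * deriv ψ y :=
    funext fun y => ((hU1 y).mul (hψ1 y)).deriv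
  have hd2 := ((hg1.mul (hψ1 x)).add ((hU1 x).mul (hψ2 x))).deriv
  have hd3 := (congrArg (fun f => deriv f x) hd1).trans hd2
  have hexp : HasDerivAt (fun y : ℝ => Complex.exp (Complex.I * lam * (y : ℂ) / (σ ^ 2 : ℂ)))
      (Complex.exp (Complex.I * lam * (x : ℂ) / (σ ^ 2 : ℂ))
        * (Complex.I * lam * 1 / (σ ^ 2 : ℂ))) x :=
    ((((hasDerivAt_id x).ofReal_comp).const_mul (Complex.I * (lam : ℂ))).div_const _).cexp
  have hkey := (hsc.mul (hψ1 x)).unique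
    (hexp.congr_of_eventuallyEq (Filter.Eventually.of_forall fun y => hψ y))
  rw [← hψ x] at hkey
  have hσ0 : (σ : ℂ) ≠ 0 := Complex.ofReal_ne_zero.2 hσ.ne'
  rw [hHg, hHg, hd3]
  push_cast
  rw [hsq x]
  have h0 := hs0 x
  generalize ((Real.sqrt (g x) : ℝ) : ℂ) = s at *
  have hk2 : s * deriv ψ x = s * ψ x * (Complex.I * lam * 1 / (σ ^ 2 : ℂ)) - s' * ψ x := by
    linear_combination hkey
  have hk3 : deriv ψ x = ψ x * (Complex.I * lam / (σ ^ 2 : ℂ)) - s' * ψ x / s := by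
    apply mul_left_cancel₀ h0
    rw [hk2]
    field_simp
  rw [hk3]
  field_simp
  ring_nf
  simp only [Complex.I_sq]
  ring
end

section
/- Structure of the double commutator L²U = [Ĥ,[Ĥ,M_U]]: let a₂, a₁, a₀, U : ℝ → ℂ be smooth and define Ĥψ = a₂ψ'' + a₁ψ' + a₀ψ on smooth ψ : ℝ → ℂ. Then the third-order coefficient of [Ĥ,[Ĥ,M_U]] vanishes: there exist smooth functions c₁, c₀ : ℝ → ℂ such that for every smooth ψ, [Ĥ,[Ĥ,M_U]]ψ = (4a₂²U'' + 2a₂a₂'U')·ψ'' + c₁·ψ' + c₀·ψ; in particular the coefficient of ψ'' is 4a₂(x)²U''(x) + 2a₂(x)a₂'(x)U'(x). -/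
theorem sm_deriv {f : ℝ → ℂ} (hf : ContDiff ℝ (⊤ : ℕ∞) f) : ContDiff ℝ (⊤ : ℕ∞) (deriv f) :=
  (contDiff_infty_iff_deriv.mp hf).2

theorem sm_diff {f : ℝ → ℂ} (hf : ContDiff ℝ (⊤ : ℕ∞) f) (x : ℝ) : DifferentiableAt ℝ f x :=
  (contDiff_infty_iff_deriv.mp hf).1 x

theorem sm_dmul {f g : ℝ → ℂ} (hf : ContDiff ℝ (⊤ : ℕ∞) f) (hg : ContDiff ℝ (⊤ : ℕ∞) g) :
    deriv (fun x => f x * g x) = fun x => deriv f x * g x + f x * deriv g x :=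
  funext fun x => deriv_fun_mul (sm_diff hf x) (sm_diff hg x)

theorem sm_dadd {f g : ℝ → ℂ} (hf : ContDiff ℝ (⊤ : ℕ∞) f) (hg : ContDiff ℝ (⊤ : ℕ∞) g) :
    deriv (fun x => f x + g x) = fun x => deriv f x + deriv g x :=
  funext fun x => deriv_fun_add (sm_diff hf x) (sm_diff hg x)

theorem sm_ddmul {f g : ℝ → ℂ} (hf : ContDiff ℝ (⊤ : ℕ∞) f) (hg : ContDiff ℝ (⊤ : ℕ∞) g) :
    deriv (deriv (fun x => f x * g x)) = fun x =>
      deriv (deriv f) x * g x + 2 * (deriv f x * deriv g x) + f x * deriv (deriv g) x := by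
  rw [sm_dmul hf hg, sm_dadd ((sm_deriv hf).mul hg) (hf.mul (sm_deriv hg)),
    sm_dmul (sm_deriv hf) hg, sm_dmul hf (sm_deriv hg)]
  funext x
  ring

/-- Structure of the double commutator `[Ĥ,[Ĥ,M_U]]` for `Ĥψ = a₂ψ'' + a₁ψ' + a₀ψ`:
the third-order coefficient vanishes, i.e. there exist smooth `c₁, c₀` such that for
every smooth `ψ`, `[Ĥ,[Ĥ,M_U]]ψ = (4a₂²U'' + 2a₂a₂'U')ψ'' + c₁ψ' + c₀ψ`; in particular
the coefficient of `ψ''` is `4a₂(x)²U''(x) + 2a₂(x)a₂'(x)U'(x)`. -/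
theorem double_commutator_structure
    (a₂ a₁ a₀ U : ℝ → ℂ)
    (ha₂ : ContDiff ℝ (⊤ : ℕ∞) a₂) (ha₁ : ContDiff ℝ (⊤ : ℕ∞) a₁) (ha₀ : ContDiff ℝ (⊤ : ℕ∞) a₀)
    (hU : ContDiff ℝ (⊤ : ℕ∞) U)
    (Hop : (ℝ → ℂ) → ℝ → ℂ)
    (hHop : ∀ (f : ℝ → ℂ) (x : ℝ),
      Hop f x = a₂ x * deriv (deriv f) x + a₁ x * deriv f x + a₀ x * f x) :
    ∃ c₁ c₀ : ℝ → ℂ, ContDiff ℝ (⊤ : ℕ∞) c₁ ∧ ContDiff ℝ (⊤ : ℕ∞) c₀ ∧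
      ∀ (ψ : ℝ → ℂ), ContDiff ℝ (⊤ : ℕ∞) ψ → ∀ x : ℝ,
        (Hop (fun y => Hop (fun z => U z * ψ z) y - U y * Hop ψ y) x
            - (Hop (fun y => U y * Hop ψ y) x - U x * Hop (Hop ψ) x))
          = (4 * a₂ x ^ 2 * deriv (deriv U) x + 2 * a₂ x * deriv a₂ x * deriv U x)
              * deriv (deriv ψ) x
            + c₁ x * deriv ψ x + c₀ x * ψ x := by
  have hU1 := sm_deriv hU
  have hU2 := sm_deriv hU1
  obtain ⟨p, hp⟩ : ∃ p : ℝ → ℂ, p = fun x => a₂ x * (2 * deriv U x) := ⟨_, rfl⟩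
  obtain ⟨q, hq⟩ : ∃ q : ℝ → ℂ, q = fun x => a₂ x * deriv (deriv U) x + a₁ x * deriv U x :=
    ⟨_, rfl⟩
  have h2U : ContDiff ℝ (⊤ : ℕ∞) (fun x => 2 * deriv U x) := contDiff_const.mul hU1
  have sp : ContDiff ℝ (⊤ : ℕ∞) p := by rw [hp]; exact ha₂.mul h2U
  have sq : ContDiff ℝ (⊤ : ℕ∞) q := by rw [hq]; exact (ha₂.mul hU2).add (ha₁.mul hU1)
  have sp1 := sm_deriv sp
  have sp2 := sm_deriv sp1
  have sq1 := sm_deriv sq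
  have sq2 := sm_deriv sq1
  have hp' : ∀ x, deriv p x = deriv a₂ x * (2 * deriv U x) + a₂ x * (2 * deriv (deriv U) x) := by
    intro x
    rw [hp, sm_dmul ha₂ h2U, sm_dmul contDiff_const hU1]
    simp
  refine ⟨fun x => a₂ x * deriv (deriv p) x + 2 * (a₂ x * deriv q x) + a₁ x * deriv p x
      - p x * deriv a₁ x,
    fun x => a₂ x * deriv (deriv q) x + a₁ x * deriv q x - p x * deriv a₀ x, ?_, ?_, ?_⟩
  · exact (((ha₂.mul sp2).add (contDiff_const.mul (ha₂.mul sq1))).add (ha₁.mul sp1)).sub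
      (sp.mul (sm_deriv ha₁))
  · exact ((ha₂.mul sq2).add (ha₁.mul sq1)).sub (sp.mul (sm_deriv ha₀))
  intro ψ hψ x
  have key : ∀ f : ℝ → ℂ, ContDiff ℝ (⊤ : ℕ∞) f → ∀ y,
      Hop (fun z => U z * f z) y - U y * Hop f y = p y * deriv f y + q y * f y := by
    intro f hf y
    rw [hHop, hHop, sm_ddmul hU hf, sm_dmul hU hf, hp, hq]
    ring
  have h1 := sm_deriv hψ
  have h2 := sm_deriv h1
  have eH : Hop ψ = fun y => a₂ y * deriv (deriv ψ) y + a₁ y * deriv ψ y + a₀ y * ψ y :=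
    funext (hHop ψ)
  have sH : ContDiff ℝ (⊤ : ℕ∞) (Hop ψ) := by
    rw [eH]; exact ((ha₂.mul h2).add (ha₁.mul h1)).add (ha₀.mul hψ)
  have dH : deriv (Hop ψ) x = deriv a₂ x * deriv (deriv ψ) x + a₂ x * deriv (deriv (deriv ψ)) x
      + (deriv a₁ x * deriv ψ x + a₁ x * deriv (deriv ψ) x)
      + (deriv a₀ x * ψ x + a₀ x * deriv ψ x) := by
    rw [eH, sm_dadd ((ha₂.mul h2).add (ha₁.mul h1)) (ha₀.mul hψ),
      sm_dadd (ha₂.mul h2) (ha₁.mul h1), sm_dmul ha₂ h2, sm_dmul ha₁ h1, sm_dmul ha₀ hψ]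
  rw [key (Hop ψ) sH x, funext (key ψ hψ), dH, hHop ψ x, hHop,
    sm_dadd (sp.mul h1) (sq.mul hψ),
    sm_dadd (sm_deriv (sp.mul h1)) (sm_deriv (sq.mul hψ)),
    sm_ddmul sp h1, sm_ddmul sq hψ, sm_dmul sp h1, sm_dmul sq hψ]
  simp only [hp']
  have hpx : p x = a₂ x * (2 * deriv U x) := by rw [hp]
  rw [hpx]
  ring
end

section
/- Explicit double commutator under the metric g = U': let U : ℝ → ℝ be smooth with U'(x) > 0 for all x, set a₂ = −(σ²/2)·(U')^{-1} and Ĥψ = a₂ψ'', and set p = U''/U'. Then for every smooth ψ : ℝ → ℂ, [Ĥ,[Ĥ,M_U]]ψ = (σ⁴/2)(U')^{-1}·( p·ψ'' + p'·ψ' + (1/2)p''·ψ ); in particular the coefficient of ψ' is (σ⁴/2)(U')^{-1}((U')^{-1}U'')' and the zero-order coefficient is (σ⁴/4)(U')^{-1}((U')^{-1}U'')''. -/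
theorem aux_deriv_smooth {E : Type*} [NormedAddCommGroup E] [NormedSpace ℝ E] {f : ℝ → E}
    (hf : ContDiff ℝ (⊤ : ℕ∞) f) : ContDiff ℝ (⊤ : ℕ∞) (deriv f) :=
  (contDiff_infty_iff_deriv.1 hf).2

theorem aux_diff {E : Type*} [NormedAddCommGroup E] [NormedSpace ℝ E] {f : ℝ → E}
    (hf : ContDiff ℝ (⊤ : ℕ∞) f) (x : ℝ) : HasDerivAt f (deriv f x) x :=
  ((contDiff_infty_iff_deriv.1 hf).1 x).hasDerivAt

theorem aux_ofReal {f : ℝ → ℝ} (hf : ContDiff ℝ (⊤ : ℕ∞) f) :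
    ContDiff ℝ (⊤ : ℕ∞) (fun y => (f y : ℂ)) :=
  Complex.ofRealCLM.contDiff.comp hf

theorem aux_deriv_ofReal {f : ℝ → ℝ} (hf : ContDiff ℝ (⊤ : ℕ∞) f) :
    deriv (fun y => (f y : ℂ)) = fun y => ((deriv f y : ℝ) : ℂ) :=
  funext fun x => (aux_diff hf x).ofReal_comp.deriv

theorem aux_mul {f g : ℝ → ℂ} (hf : ContDiff ℝ (⊤ : ℕ∞) f) (hg : ContDiff ℝ (⊤ : ℕ∞) g) :
    deriv (fun y => f y * g y) = fun y => deriv f y * g y + f y * deriv g y :=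
  funext fun x => ((aux_diff hf x).mul (aux_diff hg x)).deriv

theorem aux_mul2 {f g : ℝ → ℂ} (hf : ContDiff ℝ (⊤ : ℕ∞) f) (hg : ContDiff ℝ (⊤ : ℕ∞) g)
    (x : ℝ) : deriv (deriv (fun y => f y * g y)) x =
      deriv (deriv f) x * g x + 2 * (deriv f x * deriv g x) + f x * deriv (deriv g) x := by
  have hf1 := aux_deriv_smooth hf
  have hg1 := aux_deriv_smooth hg
  rw [aux_mul hf hg]
  have h := ((aux_diff hf1 x).mul (aux_diff hg x)).add ((aux_diff hf x).mul (aux_diff hg1 x))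
  refine Eq.trans h.deriv ?_
  ring

/-- Explicit double commutator under the metric `g = U'`: with
`Ĥψ = −(σ²/2)(U')⁻¹ψ''` and `p = U''/U'`, for every smooth `ψ : ℝ → ℂ`,
`[Ĥ,[Ĥ,M_U]]ψ = (σ⁴/2)(U')⁻¹ (pψ'' + p'ψ' + (1/2)p''ψ)`; in particular the coefficient
of `ψ'` is `(σ⁴/2)(U')⁻¹((U')⁻¹U'')'` and the zero-order coefficient is
`(σ⁴/4)(U')⁻¹((U')⁻¹U'')''`. -/
theorem double_commutator_explicit_metric
    (σ : ℝ) (hσ : 0 < σ)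
    (U : ℝ → ℝ) (hU : ContDiff ℝ (⊤ : ℕ∞) U) (hU' : ∀ x : ℝ, 0 < deriv U x)
    (p : ℝ → ℝ) (hp : ∀ x : ℝ, p x = deriv (deriv U) x / deriv U x)
    (Hop : (ℝ → ℂ) → ℝ → ℂ)
    (hHop : ∀ (f : ℝ → ℂ) (x : ℝ),
      Hop f x = -(σ ^ 2 / 2 : ℂ) * (Complex.ofReal (deriv U x))⁻¹ * deriv (deriv f) x)
    (ψ : ℝ → ℂ) (hψ : ContDiff ℝ (⊤ : ℕ∞) ψ) (x : ℝ) :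
    Hop (fun y => Hop (fun z => (U z : ℂ) * ψ z) y - (U y : ℂ) * Hop ψ y) x
        - (Hop (fun y => (U y : ℂ) * Hop ψ y) x - (U x : ℂ) * Hop (Hop ψ) x)
      = (σ ^ 4 / 2 : ℂ) * (Complex.ofReal (deriv U x))⁻¹ *
          ((p x : ℂ) * deriv (deriv ψ) x
            + Complex.ofReal (deriv p x) * deriv ψ x
            + (1 / 2 : ℂ) * Complex.ofReal (deriv (deriv p) x) * ψ x) := by
  have hU1 := aux_deriv_smooth hU
  have hU2 := aux_deriv_smooth hU1
  have hne : ∀ y, deriv U y ≠ 0 := fun y => (hU' y).ne'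
  have hneC : ∀ y, ((deriv U y : ℝ) : ℂ) ≠ 0 := fun y => Complex.ofReal_ne_zero.2 (hne y)
  have hps : ContDiff ℝ (⊤ : ℕ∞) p := by
    have : p = fun y => deriv (deriv U) y / deriv U y := funext hp
    rw [this]
    exact hU2.div hU1 hne
  have hp1 := aux_deriv_smooth hps
  have hψ1 := aux_deriv_smooth hψ
  have hψ2 := aux_deriv_smooth hψ1
  have huc := aux_ofReal hU
  have hpc := aux_ofReal hps
  -- the inverse metric
  have hq : ContDiff ℝ (⊤ : ℕ∞) (fun y => (Complex.ofReal (deriv U y))⁻¹) :=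
    (aux_ofReal hU1).inv hneC
  have hqd : ∀ y, HasDerivAt (fun y => (Complex.ofReal (deriv U y))⁻¹)
      (-(p y : ℂ) * (Complex.ofReal (deriv U y))⁻¹) y := by
    intro y
    have h := ((aux_diff hU1 y).ofReal_comp).inv (hneC y)
    refine h.congr_deriv ?_
    rw [hp y]
    push_cast
    have := hneC y
    field_simp
  have hHψ : Hop ψ = fun y =>
      (-(σ ^ 2 / 2 : ℂ) * (Complex.ofReal (deriv U y))⁻¹) * deriv (deriv ψ) y :=
    funext fun y => hHop ψ y
  have hHs : ContDiff ℝ (⊤ : ℕ∞) (Hop ψ) := by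
    rw [hHψ]
    exact (contDiff_const.mul hq).mul hψ2
  have hHd : deriv (Hop ψ) x = -(σ ^ 2 / 2 : ℂ) * (Complex.ofReal (deriv U x))⁻¹ *
      (deriv (deriv (deriv ψ)) x - (p x : ℂ) * deriv (deriv ψ) x) := by
    rw [hHψ]
    refine (((hqd x).const_mul _).mul (aux_diff hψ2 x)).deriv.trans ?_
    ring
  -- the first commutator
  have hK : ∀ f : ℝ → ℂ, ContDiff ℝ (⊤ : ℕ∞) f → ∀ y,
      Hop (fun z => (U z : ℂ) * f z) y - (U y : ℂ) * Hop f y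
        = -(σ ^ 2 / 2 : ℂ) * ((p y : ℂ) * f y + 2 * deriv f y) := by
    intro f hf y
    rw [hHop, hHop, aux_mul2 huc hf, aux_deriv_ofReal hU, aux_deriv_ofReal hU1, hp y]
    push_cast
    have := hneC y
    field_simp
    ring
  have hKψ : (fun y => Hop (fun z => (U z : ℂ) * ψ z) y - (U y : ℂ) * Hop ψ y)
      = fun y => -(σ ^ 2 / 2 : ℂ) * ((p y : ℂ) * ψ y + 2 * deriv ψ y) := funext (hK ψ hψ)
  have hd1 : deriv (fun y => -(σ ^ 2 / 2 : ℂ) * ((p y : ℂ) * ψ y + 2 * deriv ψ y))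
      = fun y => -(σ ^ 2 / 2 : ℂ) *
        (deriv (fun z => (p z : ℂ) * ψ z) y + 2 * deriv (deriv ψ) y) :=
    funext fun y => (((aux_diff (hpc.mul hψ) y).add
      ((aux_diff hψ1 y).const_mul 2)).const_mul _).deriv
  have hd2 : deriv (deriv (fun y => -(σ ^ 2 / 2 : ℂ) * ((p y : ℂ) * ψ y + 2 * deriv ψ y))) x
      = -(σ ^ 2 / 2 : ℂ) *
        (deriv (deriv (fun z => (p z : ℂ) * ψ z)) x + 2 * deriv (deriv (deriv ψ)) x) := by
    rw [hd1]
    exact (((aux_diff (aux_deriv_smooth (hpc.mul hψ)) x).add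
      ((aux_diff hψ2 x).const_mul 2)).const_mul _).deriv
  rw [hKψ, hK (Hop ψ) hHs x, hHd, hHop _ x, hHop ψ x, hd2, aux_mul2 hpc hψ,
    aux_deriv_ofReal hps, aux_deriv_ofReal hp1]
  ring
end

section
/- Sturm–Liouville form of the second-order eigenvalue problem: let U : ℝ → ℝ be smooth with U'(x) > 0 for all x, set Ĥψ = −(σ²/2)(U')^{-1}ψ'' and p = U''/U', and let λ ∈ ℂ. Then a smooth ψ : ℝ → ℂ satisfies the eigenvalue equation [Ĥ,[Ĥ,M_U]]ψ = λψ if and only if it satisfies the Sturm–Liouville equation (p·ψ')' + (1/2)p''·ψ − (2λ/σ⁴)·U'·ψ = 0. -/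
/-- The second derivative of a product of smooth functions. -/
theorem deriv2_mul_smooth (f g : ℝ → ℂ) (hf : ContDiff ℝ (⊤ : ℕ∞) f)
    (hg : ContDiff ℝ (⊤ : ℕ∞) g) (x : ℝ) :
    deriv (deriv (fun y => f y * g y)) x =
      deriv (deriv f) x * g x + 2 * (deriv f x * deriv g x) + f x * deriv (deriv g) x := by
  have hf' : ContDiff ℝ (⊤ : ℕ∞) (deriv f) := (contDiff_infty_iff_deriv.1 hf).2
  have hg' : ContDiff ℝ (⊤ : ℕ∞) (deriv g) := (contDiff_infty_iff_deriv.1 hg).2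
  have d0 : ∀ {h : ℝ → ℂ}, ContDiff ℝ (⊤ : ℕ∞) h → ∀ y, HasDerivAt h (deriv h y) y :=
    fun hh y => ((contDiff_infty_iff_deriv.1 hh).1 y).hasDerivAt
  have e : deriv (fun y => f y * g y) = fun y => deriv f y * g y + f y * deriv g y := by
    funext y
    exact ((d0 hf y).mul (d0 hg y)).deriv
  rw [e]
  have := (((d0 hf' x).mul (d0 hg x)).add ((d0 hf x).mul (d0 hg' x))).deriv
  refine Eq.trans this ?_
  ring

/-- Derivative of the complexification of a smooth real function. -/
theorem deriv_ofReal_smooth (f : ℝ → ℝ) (hf : ContDiff ℝ (⊤ : ℕ∞) f) :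
    deriv (fun y => (f y : ℂ)) = fun y => ((deriv f y : ℝ) : ℂ) := by
  funext y
  exact (((contDiff_infty_iff_deriv.1 hf).1 y).hasDerivAt.ofReal_comp).deriv

theorem contDiff_ofReal_smooth (f : ℝ → ℝ) (hf : ContDiff ℝ (⊤ : ℕ∞) f) :
    ContDiff ℝ (⊤ : ℕ∞) (fun y => (f y : ℂ)) :=
  Complex.ofRealCLM.contDiff.comp hf

/-- Sturm–Liouville form of the second-order eigenvalue problem: with
`Ĥψ = −(σ²/2)(U')⁻¹ψ''` and `p = U''/U'`, a smooth `ψ : ℝ → ℂ` satisfies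
`[Ĥ,[Ĥ,M_U]]ψ = λψ` if and only if it satisfies the Sturm–Liouville equation
`(pψ')' + (1/2)p''ψ − (2λ/σ⁴)U'ψ = 0`. -/
theorem sturm_liouville_form_second_order
    (σ : ℝ) (hσ : 0 < σ)
    (U : ℝ → ℝ) (hU : ContDiff ℝ (⊤ : ℕ∞) U) (hU' : ∀ x : ℝ, 0 < deriv U x)
    (p : ℝ → ℝ) (hp : ∀ x : ℝ, p x = deriv (deriv U) x / deriv U x)
    (Hop : (ℝ → ℂ) → ℝ → ℂ)
    (hHop : ∀ (f : ℝ → ℂ) (x : ℝ),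
      Hop f x = -(σ ^ 2 / 2 : ℂ) * (Complex.ofReal (deriv U x))⁻¹ * deriv (deriv f) x)
    (lam : ℂ) (ψ : ℝ → ℂ) (hψ : ContDiff ℝ (⊤ : ℕ∞) ψ) :
    (∀ x : ℝ,
        Hop (fun y => Hop (fun z => (U z : ℂ) * ψ z) y - (U y : ℂ) * Hop ψ y) x
            - (Hop (fun y => (U y : ℂ) * Hop ψ y) x - (U x : ℂ) * Hop (Hop ψ) x)
          = lam * ψ x) ↔
      (∀ x : ℝ,
        deriv (fun y => (p y : ℂ) * deriv ψ y) x
            + (1 / 2 : ℂ) * Complex.ofReal (deriv (deriv p) x) * ψ x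
            - (2 * lam / (σ ^ 4 : ℂ)) * Complex.ofReal (deriv U x) * ψ x
          = 0) := by
  have dS : ∀ {h : ℝ → ℂ}, ContDiff ℝ (⊤ : ℕ∞) h → ContDiff ℝ (⊤ : ℕ∞) (deriv h) :=
    fun hh => (contDiff_infty_iff_deriv.1 hh).2
  have dA : ∀ {h : ℝ → ℂ}, ContDiff ℝ (⊤ : ℕ∞) h → ∀ y, HasDerivAt h (deriv h y) y :=
    fun hh y => ((contDiff_infty_iff_deriv.1 hh).1 y).hasDerivAt
  have hU1 : ContDiff ℝ (⊤ : ℕ∞) (deriv U) := (contDiff_infty_iff_deriv.1 hU).2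
  have hU2 : ContDiff ℝ (⊤ : ℕ∞) (deriv (deriv U)) := (contDiff_infty_iff_deriv.1 hU1).2
  have hpS : ContDiff ℝ (⊤ : ℕ∞) p := by
    rw [show p = fun x => deriv (deriv U) x / deriv U x from funext hp]
    exact hU2.div hU1 (fun x => (hU' x).ne')
  have hp1 : ContDiff ℝ (⊤ : ℕ∞) (deriv p) := (contDiff_infty_iff_deriv.1 hpS).2
  have hv : ∀ x, ((deriv U x : ℝ) : ℂ) ≠ 0 := fun x => by
    exact_mod_cast (hU' x).ne'
  have hUC := contDiff_ofReal_smooth U hU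
  have hVC := contDiff_ofReal_smooth _ hU1
  have hPC := contDiff_ofReal_smooth p hpS
  have hpC : ∀ x, ((deriv (deriv U) x : ℝ) : ℂ) = (p x : ℂ) * ((deriv U x : ℝ) : ℂ) := by
    intro x
    rw [hp x]
    push_cast
    field_simp [hv x]
  -- the first commutator
  have comm : ∀ f : ℝ → ℂ, ContDiff ℝ (⊤ : ℕ∞) f → ∀ y,
      Hop (fun z => (U z : ℂ) * f z) y - (U y : ℂ) * Hop f y =
        -(σ ^ 2 / 2 : ℂ) * ((p y : ℂ) * f y + 2 * deriv f y) := by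
    intro f hf y
    rw [hHop, hHop, deriv2_mul_smooth _ _ hUC hf, deriv_ofReal_smooth U hU,
      deriv_ofReal_smooth _ hU1]
    simp only [hpC]
    have := hv y
    field_simp
    ring
  have hgS : ContDiff ℝ (⊤ : ℕ∞) (Hop ψ) := by
    rw [show Hop ψ = _ from funext (hHop ψ)]
    exact (contDiff_const.mul (hVC.inv hv)).mul (dS (dS hψ))
  have hg1 : ∀ x, deriv (Hop ψ) x = -(σ ^ 2 / 2 : ℂ) * (Complex.ofReal (deriv U x))⁻¹ *
      (deriv (deriv (deriv ψ)) x - (p x : ℂ) * deriv (deriv ψ) x) := by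
    intro x
    rw [show Hop ψ = _ from funext (hHop ψ)]
    have h1 := ((((dA hVC x).inv (hv x)).const_mul (-(σ ^ 2 / 2 : ℂ))).mul
      (dA (dS (dS hψ)) x)).deriv
    refine Eq.trans h1 ?_
    rw [deriv_ofReal_smooth _ hU1]
    simp only [hpC, Pi.inv_apply]
    have := hv x
    field_simp
    ring
  have key : ∀ x, Hop (fun y => Hop (fun z => (U z : ℂ) * ψ z) y - (U y : ℂ) * Hop ψ y) x
            - (Hop (fun y => (U y : ℂ) * Hop ψ y) x - (U x : ℂ) * Hop (Hop ψ) x)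
      = (σ ^ 4 / 2 : ℂ) * (Complex.ofReal (deriv U x))⁻¹ *
        (deriv (fun y => (p y : ℂ) * deriv ψ y) x
            + (1 / 2 : ℂ) * Complex.ofReal (deriv (deriv p) x) * ψ x) := by
    intro x
    rw [comm (Hop ψ) hgS x, show (fun y => Hop (fun z => (U z : ℂ) * ψ z) y - (U y : ℂ) * Hop ψ y)
      = _ from funext (comm ψ hψ), hHop, hg1, hHop]
    have e1 : deriv (fun y => (p y : ℂ) * deriv ψ y) x =
        ((deriv p x : ℝ) : ℂ) * deriv ψ x + (p x : ℂ) * deriv (deriv ψ) x := by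
      have h1 := ((dA hPC x).mul (dA (dS hψ) x)).deriv
      rw [deriv_ofReal_smooth p hpS] at h1
      exact h1
    have hF : ContDiff ℝ (⊤ : ℕ∞) (fun y => (p y : ℂ) * ψ y + 2 * deriv ψ y) :=
      (hPC.mul hψ).add (contDiff_const.mul (dS hψ))
    have e2 := deriv2_mul_smooth (fun _ => -(σ ^ 2 / 2 : ℂ)) _ contDiff_const hF x
    have e3 : deriv (deriv (fun y => (p y : ℂ) * ψ y + 2 * deriv ψ y)) x =
        deriv (deriv (fun y => (p y : ℂ) * ψ y)) x + 2 * deriv (deriv (deriv ψ)) x := by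
      have e4 : deriv (fun y => (p y : ℂ) * ψ y + 2 * deriv ψ y) =
          fun y => deriv (fun y => (p y : ℂ) * ψ y) y + 2 * deriv (deriv ψ) y := by
        funext y
        exact ((dA (hPC.mul hψ) y).add ((dA (dS hψ) y).const_mul 2)).deriv
      rw [e4]
      exact ((dA (dS (hPC.mul hψ)) x).add ((dA (dS (dS hψ)) x).const_mul 2)).deriv
    rw [e2, e3, deriv2_mul_smooth _ _ hPC hψ, e1, deriv_ofReal_smooth p hpS,
      deriv_ofReal_smooth _ hp1]
    simp only [deriv_const', deriv_const]
    have := hv x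
    field_simp
    ring
  have hs : (σ : ℂ) ≠ 0 := by exact_mod_cast hσ.ne'
  refine forall_congr' fun x => ?_
  rw [key x]
  generalize deriv (fun y => (p y : ℂ) * deriv ψ y) x
    + (1 / 2 : ℂ) * Complex.ofReal (deriv (deriv p) x) * ψ x = A
  have hx := hv x
  rw [sub_eq_zero]
  constructor
  · intro h
    rw [show (2 * lam / (σ ^ 4 : ℂ)) * Complex.ofReal (deriv U x) * ψ x =
      (2 / (σ ^ 4 : ℂ)) * Complex.ofReal (deriv U x) * (lam * ψ x) by ring, ← h]
    field_simp
  · intro h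
    rw [h]
    field_simp
end
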